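/- For every real β ≥ 0, all integers m ≥ n+1 ≥ 1, and every quaternion q ∈ ℍ with conjugate q̄: (β+m) · Z^{(β)}_{m−1,n}(q,q̄) = (n+1) · Z^{(β)}_{m,n+1}(q,q̄) + q̄ · Z^{(β)}_{m,n}(q,q̄). -/

import Mathlib

open Finset Quaternion

/-- Pochhammer symbol `(a)_j = a (a+1) ⋯ (a+j-1)`. -/
noncomputable def poch (a : ℝ) (j : ℕ) : ℝ := ∏ i ∈ Finset.range j, (a + i)

/-- The quaternionic 2D Laguerre polynomial `Z^{(β)}_{m,n}(q,q̄)` (for `m ≥ n`). -/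
noncomputable def Zq (β : ℝ) (m n : ℕ) (q : ℍ[ℝ]) : ℍ[ℝ] :=
  ∑ k ∈ Finset.range (n + 1),
    ((-1 : ℝ) ^ (n - k) * poch (β + 1) m /
        (k.factorial * (n - k).factorial * poch (β + 1) (m - k))) •
      (q ^ (m - k) * (star q) ^ (n - k))

/-!
Up to the factor `n!` and the quotient `(β+1)_m / (β+1)_{m-k} = (β+m)(β+m-1)⋯(β+m-k+1)`, the
coefficient of `q^(m-k) (-q̄)^(n-k)` in `Z_{m,n}` is the binomial coefficient `n.choose k`.
Pascal's rule for `(n+1).choose k` therefore splits `(n+1)! Z_{m,n+1}` into `-q̄ · n! Z_{m,n}` and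
a sum in which every falling factorial has the factor `β + m`; removing this factor leaves
`n! Z_{m-1,n}`.
-/

section Laguerre

variable {R A : Type*} [CommRing R] [Ring A] [Algebra R A]

/-- The polynomial `n! Z^{(β)}_{n+d,n}(x, y)` with division-free coefficients, in which `y` stands
for the conjugate of `x` but need not even commute with it. Indexing by the difference `d` of the
two indices avoids truncated subtraction in the exponents. -/
noncomputable def laguerre2D (β : R) (d n : ℕ) (x y : A) : A :=
  ∑ kj ∈ antidiagonal n, n.choose kj.1 •
    (descPochhammer R kj.1).eval (β + d + n) • ((-y) ^ kj.2 * x ^ (d + kj.2))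

theorem descPochhammer_succ_eval_left (k : ℕ) (a : R) :
    (descPochhammer R (k + 1)).eval a = a * (descPochhammer R k).eval (a - 1) := by
  simp only [descPochhammer_succ_left, Polynomial.eval_mul, Polynomial.eval_comp,
    Polynomial.eval_sub, Polynomial.eval_X, Polynomial.eval_one]

theorem laguerre2D_succ (β : R) (d n : ℕ) (x y : A) :
    laguerre2D β d (n + 1) x y =
      (β + d + n + 1) • laguerre2D β d n x y - y * laguerre2D β (d + 1) n x y := by
  have pascal := sum_antidiagonal_choose_succ_nsmul (fun k j ↦
    (descPochhammer R k).eval (β + d + n + 1) • ((-y) ^ j * x ^ (d + j))) n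
  have keep_k : ∑ kj ∈ antidiagonal n, n.choose kj.1 •
      (descPochhammer R kj.1).eval (β + d + n + 1) • ((-y) ^ (kj.2 + 1) * x ^ (d + (kj.2 + 1))) =
        -(y * laguerre2D β (d + 1) n x y) := by
    have shift : β + (d + 1 : ℕ) + n = β + d + n + 1 := by push_cast; ring
    rw [laguerre2D, ← neg_mul, mul_sum, shift]
    refine sum_congr rfl fun kj _ ↦ ?_
    rw [mul_smul_comm, mul_smul_comm, ← mul_assoc, ← pow_succ', add_right_comm d 1, add_assoc d]
  have raise_k : ∑ kj ∈ antidiagonal n, n.choose kj.2 •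
      (descPochhammer R (kj.1 + 1)).eval (β + d + n + 1) • ((-y) ^ kj.2 * x ^ (d + kj.2)) =
        (β + d + n + 1) • laguerre2D β d n x y := by
    rw [laguerre2D, smul_sum]
    refine sum_congr rfl fun kj hkj ↦ ?_
    rw [Nat.choose_symm_of_eq_add (mem_antidiagonal.1 hkj).symm, descPochhammer_succ_eval_left,
      add_sub_cancel_right, mul_smul, smul_comm (n.choose _)]
  rw [laguerre2D, Nat.cast_succ, ← add_assoc, pascal, keep_k, raise_k, neg_add_eq_sub]

end Laguerre

theorem poch_succ (a : ℝ) (j : ℕ) : poch a (j + 1) = poch a j * (a + j) :=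
  prod_range_succ _ j

theorem poch_pos {a : ℝ} (ha : 0 < a) (j : ℕ) : 0 < poch a j :=
  prod_pos fun _ _ ↦ by positivity

theorem poch_add (a : ℝ) (k j : ℕ) :
    poch (a + 1) (k + j) = (descPochhammer ℝ k).eval (a + k + j) * poch (a + 1) j := by
  induction k with
  | zero => simp
  | succ k ih =>
    have shift : a + (k + 1 : ℕ) + j - 1 = a + k + j := by push_cast; ring
    rw [add_right_comm k, poch_succ, ih, descPochhammer_succ_eval_left, shift]
    push_cast
    ring

theorem Zq_eq_smul_laguerre2D {β : ℝ} {d n : ℕ} (h : poch (β + 1) (n + d) ≠ 0) (q : ℍ[ℝ]) :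
    Zq β (n + d) n q = (n.factorial : ℝ)⁻¹ • laguerre2D β d n q (star q) := by
  rw [Zq, laguerre2D, Nat.sum_antidiagonal_eq_sum_range_succ_mk, smul_sum]
  refine sum_congr rfl fun k hk ↦ ?_
  obtain ⟨j, rfl⟩ := Nat.exists_eq_add_of_le (mem_range_succ_iff.1 hk)
  have hsplit : poch (β + 1) (k + j + d) =
      (descPochhammer ℝ k).eval (β + d + (k + j : ℕ)) * poch (β + 1) (d + j) := by
    rw [show k + j + d = k + (d + j) by ring, poch_add]
    congr 2
    push_cast
    ring
  have hpoch : poch (β + 1) (d + j) ≠ 0 := right_ne_zero_of_mul (hsplit ▸ h)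
  have hcomm : Commute q (star q) := (star_comm_self' q).symm
  rw [show k + j + d - k = d + j by omega, Nat.add_sub_cancel_left, hsplit,
    (hcomm.pow_pow _ _).eq, ← neg_one_smul ℝ (star q), smul_pow, smul_mul_assoc,
    ← Nat.cast_smul_eq_nsmul ℝ, Nat.cast_add_choose, smul_smul, smul_smul, smul_smul]
  congr 1
  field_simp

theorem quat_recurrence_lower_general {β : ℝ} {m n : ℕ} (hβ : poch (β + 1) m ≠ 0)
    (hmn : n + 1 ≤ m) (q : ℍ[ℝ]) :
    (β + m) • Zq β (m - 1) n q
      = ((n : ℝ) + 1) • Zq β m (n + 1) q + star q * Zq β m n q := by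
  obtain ⟨d, rfl⟩ := Nat.exists_eq_add_of_le hmn
  have hpred : poch (β + 1) (n + d) ≠ 0 := by
    rw [add_right_comm, poch_succ] at hβ
    exact left_ne_zero_of_mul hβ
  have hZ : Zq β (n + 1 + d) n q =
      (n.factorial : ℝ)⁻¹ • laguerre2D β (d + 1) n q (star q) := by
    rw [add_right_comm, add_assoc] at hβ ⊢
    exact Zq_eq_smul_laguerre2D hβ q
  have hfact : ((n : ℝ) + 1) * ((n + 1).factorial : ℝ)⁻¹ = (n.factorial : ℝ)⁻¹ := by
    rw [Nat.factorial_succ]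
    push_cast
    field_simp
  have hrec : (β + (n + 1 + d : ℕ)) • laguerre2D β d n q (star q) =
      laguerre2D β d (n + 1) q (star q) + star q * laguerre2D β (d + 1) n q (star q) := by
    rw [laguerre2D_succ, sub_add_cancel]
    congr 1
    push_cast
    ring
  rw [show n + 1 + d - 1 = n + d by omega, hZ, Zq_eq_smul_laguerre2D hβ,
    Zq_eq_smul_laguerre2D hpred, smul_comm, hrec, smul_add, mul_smul_comm,
    smul_smul ((n : ℝ) + 1), hfact]

/-- Recurrence `(β+m) Z^{(β)}_{m−1,n}(q,q̄) = (n+1) Z^{(β)}_{m,n+1}(q,q̄) + q̄ Z^{(β)}_{m,n}(q,q̄)`. -/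
theorem quat_recurrence_lower (β : ℝ) (hβ : 0 ≤ β) (m n : ℕ) (hmn : n + 1 ≤ m)
    (q : ℍ[ℝ]) :
    (β + m) • Zq β (m - 1) n q
      = ((n : ℝ) + 1) • Zq β m (n + 1) q + star q * Zq β m n q :=
  quat_recurrence_lower_general (poch_pos (by positivity) m).ne' hmn q
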